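/- Let a > 0 and let 𝕃_a = {x + m/a : x ∈ 𝕃, m ∈ ℤ}. Let μ be a nonzero finite Borel measure on ℝ with μ(ℝ \ 𝕃_a) = 0. Let g : ℝ → ℝ be even and a-periodic with g(0) > 0, and suppose there is a sequence (a_k)_{k≥0} of nonnegative reals such that for every ξ ∈ ℝ the partial sums S_N(ξ) = Σ_{k=0}^{N} a_k·cos(2πkξ/a) converge to g(ξ) as N → ∞. Then there exists a nonzero finite Borel measure ν on ℝ with ν(ℝ \ 𝕃_a) = 0 such that ν̂(ξ) = g(ξ)·μ̂(ξ) for all ξ ∈ ℝ. -/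

import Mathlib

open MeasureTheory Filter Set

/-- The Fourier transform of a measure on `ℝ`: `μ̂(ξ) = ∫ e^(−2πiξx) dμ(x)`. -/
noncomputable def fourierT (μ : Measure ℝ) (ξ : ℝ) : ℂ :=
  ∫ x, Complex.exp (((-2 * Real.pi * ξ * x : ℝ) : ℂ) * Complex.I) ∂μ

/-- `𝕃_a = 𝕃 + (1/a)ℤ`, the set of translates of Liouville numbers by `m/a`, `m ∈ ℤ`. -/
def LiouvilleShifted (a : ℝ) : Set ℝ :=
  {y : ℝ | ∃ x : ℝ, Liouville x ∧ ∃ m : ℤ, y = x + (m : ℝ) / a}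

/-!
Write `t k = k / a`; only the invariance of `𝕃_a` under translation by `± t k` will matter. By
nonnegativity and convergence at `ξ = 0` the coefficients are summable, so
`ρ = ∑ k, (c k / 2) • (δ_{t k} + δ_{-t k})` is a finite measure; its Fourier transform is the cosine
series, that is, `g`. Hence `ν = μ ∗ ρ` has Fourier transform `g * μ̂`. It is a superposition of
translates of `μ` by `± t k`, each of which is again carried by `𝕃_a`, and `ν ≠ 0` because
`g 0 * μ̂ 0 ≠ 0`.
-/

section Convolution

variable {G : Type*} [MeasurableSpace G]

lemma conv_measure_sum [AddMonoid G] [MeasurableAdd₂ G] {ι : Type*} [Countable ι]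
    (μ : Measure G) (m : ι → Measure G) [∀ i, SFinite (m i)] :
    μ ∗ Measure.sum m = Measure.sum fun i ↦ μ ∗ m i := by
  simp only [Measure.conv]
  rw [Measure.prod_sum_right, Measure.map_sum (by fun_prop)]

lemma map_add_const_compl_eq_zero [AddGroup G] [MeasurableAdd G] {μ : Measure G} {S : Set G}
    {t : G} (hS : ∀ x ∈ S, x + t ∈ S) (hμS : μ Sᶜ = 0) : μ.map (· + t) Sᶜ = 0 := by
  rw [← MeasurableEquiv.coe_addRight, MeasurableEquiv.map_apply]
  exact measure_mono_null (fun x hxt hx ↦ hxt (hS x hx)) hμS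

end Convolution

section CharFun

variable {E : Type*} [NormedAddCommGroup E] [InnerProductSpace ℝ E] [MeasurableSpace E]
  [OpensMeasurableSpace E]

lemma integrable_exp_inner_mul_I (μ : Measure E) [IsFiniteMeasure μ] (ξ : E) :
    Integrable (fun x ↦ Complex.exp (inner ℝ x ξ * Complex.I)) μ :=
  (BoundedContinuousFunction.innerProbChar ξ).integrable μ

lemma hasSum_charFun {ι : Type*} (m : ι → Measure E) [IsFiniteMeasure (Measure.sum m)] (ξ : E) :
    HasSum (fun i ↦ charFun (m i) ξ) (charFun (Measure.sum m) ξ) :=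
  hasSum_integral_measure (integrable_exp_inner_mul_I _ ξ)

lemma charFun_add_measure (μ ν : Measure E) [IsFiniteMeasure μ] [IsFiniteMeasure ν] (ξ : E) :
    charFun (μ + ν) ξ = charFun μ ξ + charFun ν ξ :=
  integral_add_measure (integrable_exp_inner_mul_I μ ξ) (integrable_exp_inner_mul_I ν ξ)

lemma charFun_half_smul_dirac_add_dirac_neg {r : ℝ} (hr : 0 ≤ r) (t ξ : E) :
    charFun (ENNReal.ofReal (r / 2) • (Measure.dirac t + Measure.dirac (-t))) ξ
      = ((r * Real.cos (inner ℝ t ξ) : ℝ) : ℂ) := by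
  rw [charFun_apply, integral_smul_measure, ← charFun_apply, charFun_add_measure, charFun_dirac,
    charFun_dirac, inner_neg_left, Complex.ofReal_neg, ← Complex.two_cos,
    ENNReal.toReal_ofReal (div_nonneg hr zero_le_two), Complex.real_smul]
  push_cast
  ring

end CharFun

section SymmDiracSum

/-- The symmetric atomic measure `∑ k, (c k / 2) • (δ_{t k} + δ_{-t k})`, whose Fourier transform is
the cosine series with coefficients `c` and frequencies `t`. Negative coefficients are truncated
to `0`. -/
noncomputable def symmDiracSum {ι E : Type*} [Neg E] [MeasurableSpace E] (c : ι → ℝ) (t : ι → E) :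
    Measure E :=
  Measure.sum fun k ↦
    ENNReal.ofReal (c k / 2) • (Measure.dirac (t k) + Measure.dirac (-t k))

lemma isFiniteMeasure_symmDiracSum {ι E : Type*} [Neg E] [MeasurableSpace E] {c : ι → ℝ}
    (hc : Summable c) (t : ι → E) : IsFiniteMeasure (symmDiracSum c t) := by
  constructor
  simp only [symmDiracSum, Measure.sum_apply _ MeasurableSet.univ, Measure.smul_apply,
    Measure.add_apply, measure_univ, smul_eq_mul, ENNReal.tsum_mul_right]
  exact ENNReal.mul_lt_top (hc.div_const 2).tsum_ofReal_lt_top (by simp)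

lemma conv_symmDiracSum_compl_eq_zero {ι G : Type*} [Countable ι] [AddGroup G] [MeasurableSpace G]
    [MeasurableAdd₂ G] {μ : Measure G} [SFinite μ] {S : Set G} {t : ι → G}
    (hS : ∀ k x, x + t k ∈ S ↔ x ∈ S) (hμS : μ Sᶜ = 0) (c : ι → ℝ) :
    (μ ∗ symmDiracSum c t) Sᶜ = 0 := by
  have hadd (k : ι) : μ.map (· + t k) Sᶜ = 0 :=
    map_add_const_compl_eq_zero (fun x ↦ (hS k x).2) hμS
  have hsub (k : ι) : μ.map (· + -t k) Sᶜ = 0 :=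
    map_add_const_compl_eq_zero (fun x hx ↦ (hS k _).1 (by rwa [neg_add_cancel_right])) hμS
  rw [symmDiracSum, conv_measure_sum, Measure.sum_apply_of_countable, ENNReal.tsum_eq_zero]
  intro k
  rw [Measure.conv_smul_right, Measure.conv_add, Measure.conv_dirac, Measure.conv_dirac,
    Measure.smul_apply, Measure.add_apply, hadd, hsub, add_zero, smul_zero]

variable {ι E : Type*} [NormedAddCommGroup E] [InnerProductSpace ℝ E] [MeasurableSpace E]
  [OpensMeasurableSpace E]

lemma hasSum_charFun_symmDiracSum {c : ι → ℝ} (hc_nonneg : ∀ k, 0 ≤ c k) (hc : Summable c)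
    (t : ι → E) (ξ : E) :
    HasSum (fun k ↦ ((c k * Real.cos (inner ℝ (t k) ξ) : ℝ) : ℂ))
      (charFun (symmDiracSum c t) ξ) := by
  have hfin := isFiniteMeasure_symmDiracSum hc t
  rw [symmDiracSum] at hfin ⊢
  simp only [← charFun_half_smul_dirac_add_dirac_neg (hc_nonneg _)]
  exact hasSum_charFun _ ξ

lemma charFun_symmDiracSum_eq_of_tendsto {c : ℕ → ℝ} (hc_nonneg : ∀ k, 0 ≤ c k) (hc : Summable c)
    {t : ℕ → E} {ξ : E} {r : ℝ}
    (h : Tendsto (fun N ↦ ∑ k ∈ Finset.range N, c k * Real.cos (inner ℝ (t k) ξ))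
      atTop (nhds r)) :
    charFun (symmDiracSum c t) ξ = r := by
  refine tendsto_nhds_unique (hasSum_charFun_symmDiracSum hc_nonneg hc t ξ).tendsto_sum_nat ?_
  simpa only [Function.comp_def, Complex.ofReal_sum] using
    (Complex.continuous_ofReal.tendsto r).comp h

end SymmDiracSum

lemma fourierT_eq_charFun (μ : Measure ℝ) (ξ : ℝ) :
    fourierT μ ξ = charFun μ (-2 * Real.pi * ξ) := by
  simp only [fourierT, charFun_apply_real, Complex.ofReal_mul]

lemma fourierT_zero (μ : Measure ℝ) : fourierT μ 0 = μ.real univ := by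
  rw [fourierT_eq_charFun, mul_zero, charFun_zero]

lemma fourierT_conv (μ ν : Measure ℝ) [IsFiniteMeasure μ] [IsFiniteMeasure ν] (ξ : ℝ) :
    fourierT (μ ∗ ν) ξ = fourierT μ ξ * fourierT ν ξ := by
  simp only [fourierT_eq_charFun, charFun_conv]

lemma add_intCast_div_mem_liouvilleShifted_iff (a : ℝ) (k : ℤ) (x : ℝ) :
    x + k / a ∈ LiouvilleShifted a ↔ x ∈ LiouvilleShifted a := by
  constructor
  · rintro ⟨y, hy, m, hm⟩
    exact ⟨y, hy, m - k, by push_cast; linear_combination hm⟩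
  · rintro ⟨y, hy, m, rfl⟩
    exact ⟨y, hy, m + k, by push_cast; ring⟩

theorem stmt15_general {S : Set ℝ} {t : ℕ → ℝ} (hS : ∀ k x, x + t k ∈ S ↔ x ∈ S)
    (μ : Measure ℝ) [IsFiniteMeasure μ] (hμ_ne : μ ≠ 0) (hμS : μ Sᶜ = 0)
    (g : ℝ → ℝ) (hg0 : g 0 ≠ 0) (c : ℕ → ℝ) (hc_nonneg : ∀ k, 0 ≤ c k)
    (hc_conv : ∀ ξ : ℝ, Tendsto
      (fun N ↦ ∑ k ∈ Finset.range (N + 1), c k * Real.cos (2 * Real.pi * t k * ξ))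
      atTop (nhds (g ξ))) :
    ∃ ν : Measure ℝ, ν ≠ 0 ∧ IsFiniteMeasure ν ∧ ν Sᶜ = 0 ∧
      ∀ ξ : ℝ, fourierT ν ξ = (g ξ : ℂ) * fourierT μ ξ := by
  have hseries (ξ : ℝ) : Tendsto
      (fun N ↦ ∑ k ∈ Finset.range N, c k * Real.cos (2 * Real.pi * t k * ξ)) atTop (nhds (g ξ)) :=
    (tendsto_add_atTop_iff_nat 1).1 (hc_conv ξ)
  have hc : Summable c := by
    have h0 := hseries 0
    simp only [mul_zero, Real.cos_zero, mul_one] at h0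
    exact ((hasSum_iff_tendsto_nat_of_nonneg hc_nonneg _).2 h0).summable
  have : IsFiniteMeasure (symmDiracSum c t) := isFiniteMeasure_symmDiracSum hc t
  have hρ (ξ : ℝ) : fourierT (symmDiracSum c t) ξ = g ξ := by
    rw [fourierT_eq_charFun]
    refine charFun_symmDiracSum_eq_of_tendsto hc_nonneg hc ((hseries ξ).congr fun N ↦ ?_)
    refine Finset.sum_congr rfl fun k _ ↦ ?_
    rw [← Real.cos_neg, RCLike.inner_apply, conj_trivial]
    ring_nf
  have hν (ξ : ℝ) : fourierT (μ ∗ symmDiracSum c t) ξ = g ξ * fourierT μ ξ := by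
    rw [fourierT_conv, hρ, mul_comm]
  refine ⟨μ ∗ symmDiracSum c t, fun h0 ↦ ?_, inferInstance,
    conv_symmDiracSum_compl_eq_zero hS hμS c, hν⟩
  have hν0 := hν 0
  rw [h0, fourierT_zero, fourierT_zero] at hν0
  simp [hg0, hμ_ne, measureReal_eq_zero_iff] at hν0

theorem stmt15 (a : ℝ) (ha : 0 < a)
    (μ : Measure ℝ) [IsFiniteMeasure μ] (hμ_ne : μ ≠ 0)
    (hμL : μ (LiouvilleShifted a)ᶜ = 0)
    (g : ℝ → ℝ)
    (hg_even : ∀ x, g (-x) = g x)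
    (hg_per : ∀ x, g (x + a) = g x)
    (hg0 : 0 < g 0)
    (c : ℕ → ℝ) (hc_nonneg : ∀ k, 0 ≤ c k)
    (hc_conv : ∀ ξ : ℝ, Tendsto
      (fun N : ℕ => ∑ k ∈ Finset.range (N + 1), c k * Real.cos (2 * Real.pi * k * ξ / a))
      atTop (nhds (g ξ))) :
    ∃ ν : Measure ℝ, ν ≠ 0 ∧ IsFiniteMeasure ν ∧ ν (LiouvilleShifted a)ᶜ = 0 ∧
      ∀ ξ : ℝ, fourierT ν ξ = (g ξ : ℂ) * fourierT μ ξ :=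
  stmt15_general (t := fun k ↦ k / a)
    (fun k x ↦ mod_cast add_intCast_div_mem_liouvilleShifted_iff a k x) μ hμ_ne hμL g hg0.ne' c
    hc_nonneg (by simpa only [mul_div_assoc', div_mul_eq_mul_div] using hc_conv)
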